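/- Let n ≥ 3, let D_n ∈ M_n(ℂ) be the nilpotent Jordan block (1's on the superdiagonal, 0 elsewhere), and let 𝒥_n be the unital subalgebra of M_n(ℂ) generated by I and D_n, so every A ∈ 𝒥_n has a unique expression A = λ₁I + λ₂D_n + ⋯ + λ_nD_n^{n−1} with λ_i ∈ ℂ. The linear map δ : 𝒥_n → M_n(ℂ) defined by δ(A) = (λ₃ − λ₂)E_{1n} (where E_{1n} is the matrix unit with 1 in position (1,n)) is a local derivation but is not a derivation. -/

import Mathlib

open Matrix

/-- The nilpotent Jordan block: `1`s on the superdiagonal, `0` elsewhere. -/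
def jordanBlock (n : ℕ) : Matrix (Fin n) (Fin n) ℂ :=
  Matrix.of fun i j => if (i : ℕ) + 1 = (j : ℕ) then 1 else 0

section

variable {n : ℕ}

/-- `𝒥ₙ`, the unital subalgebra of `Mₙ(ℂ)` generated by the identity and the
nilpotent Jordan block. -/
def Jn (n : ℕ) : Subalgebra ℂ (Matrix (Fin n) (Fin n) ℂ) :=
  Algebra.adjoin ℂ ({jordanBlock n} : Set (Matrix (Fin n) (Fin n) ℂ))

/-- `δ : 𝒥ₙ → Mₙ(ℂ)` is a derivation if `δ(xy) = δ(x)y + xδ(y)`, where `Mₙ(ℂ)` is a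
`𝒥ₙ`-bimodule via matrix multiplication. -/
def IsDerivation (δ : ↥(Jn n) →ₗ[ℂ] Matrix (Fin n) (Fin n) ℂ) : Prop :=
  ∀ x y : ↥(Jn n), δ (x * y) = δ x * (y : Matrix (Fin n) (Fin n) ℂ) +
    (x : Matrix (Fin n) (Fin n) ℂ) * δ y

/-- `δ : 𝒥ₙ → Mₙ(ℂ)` is a local derivation if for every `A ∈ 𝒥ₙ` there is a
derivation `δ_A` with `δ A = δ_A A`. -/
def IsLocalDerivation (δ : ↥(Jn n) →ₗ[ℂ] Matrix (Fin n) (Fin n) ℂ) : Prop :=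
  ∀ A : ↥(Jn n), ∃ δA : ↥(Jn n) →ₗ[ℂ] Matrix (Fin n) (Fin n) ℂ,
    IsDerivation δA ∧ δ A = δA A

end

/-!
For `A = λ₁I + λ₂D + ⋯ + λₙDⁿ⁻¹`, the inner derivations given by matrix units in the last column
are `[A, cE₂ₙ] = cλ₂E₁ₙ` and `[A, cE₃ₙ] = c(λ₂E₂ₙ + λ₃E₁ₙ)`. Every value `(aλ₂ + bλ₃)E₁ₙ` is thus
attained by a derivation: by `[·, cE₂ₙ]` with `c` depending on `A` if `λ₂ ≠ 0`, and by `[·, bE₃ₙ]`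
if `λ₂ = 0`. But a derivation of this form must have `b = 0`, since it sends `D²` to `bE₁ₙ`,
whereas `DE₁ₙ = E₁ₙD = 0`.
-/

section Toeplitz

variable {n : ℕ}

theorem jordanBlock_apply (i j : Fin n) :
    jordanBlock n i j = if (i : ℕ) + 1 = j then 1 else 0 :=
  rfl

theorem jordanBlock_pow_apply (k : ℕ) (i j : Fin n) :
    (jordanBlock n ^ k) i j = if (i : ℕ) + k = j then 1 else 0 := by
  induction k generalizing j with
  | zero => simp [Matrix.one_apply, Fin.ext_iff]
  | succ k ih =>
    rw [pow_succ, Matrix.mul_apply]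
    simp only [ih, jordanBlock_apply]
    by_cases h : (i : ℕ) + k < n
    · rw [Finset.sum_eq_single ⟨i + k, h⟩] <;> grind
    · rw [Finset.sum_eq_zero] <;> grind

theorem sum_smul_jordanBlock_pow_apply_zero (c : Fin n → ℂ) (j : Fin n) :
    (∑ k : Fin n, c k • jordanBlock n ^ (k : ℕ)) ⟨0, j.pos⟩ j = c j := by
  simp [Matrix.sum_apply, jordanBlock_pow_apply, ← Fin.ext_iff]

open Polynomial in
theorem aeval_jordanBlock_apply (p : ℂ[X]) (i j : Fin n) :
    aeval (jordanBlock n) p i j = if i ≤ j then p.coeff (j - i) else 0 := by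
  induction p using Polynomial.induction_on' with
  | add p q hp hq => simp [hp, hq, ite_add_ite]
  | monomial k a =>
    rw [aeval_monomial, ← Algebra.smul_def, Matrix.smul_apply, jordanBlock_pow_apply,
      coeff_monomial, smul_eq_mul, mul_ite, mul_one, mul_zero]
    grind

namespace Jn

theorem jordanBlock_mem : jordanBlock n ∈ Jn n :=
  Algebra.self_mem_adjoin_singleton ℂ _

theorem exists_aeval_eq (x : Jn n) :
    ∃ p : Polynomial ℂ, Polynomial.aeval (jordanBlock n) p = x.1 := by
  have hx : x.1 ∈ Algebra.adjoin ℂ {jordanBlock n} := x.2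
  rwa [Algebra.adjoin_singleton_eq_range_aeval] at hx

theorem apply_eq_zero_of_lt (x : Jn n) {i j : Fin n} (h : j < i) : x.1 i j = 0 := by
  obtain ⟨p, hp⟩ := exists_aeval_eq x
  simp [← hp, aeval_jordanBlock_apply, h.not_ge]

theorem apply_eq_apply_of_add_eq (x : Jn n) {i j i' j' : Fin n} (h : (i : ℕ) + j' = i' + j) :
    x.1 i j = x.1 i' j' := by
  obtain ⟨p, hp⟩ := exists_aeval_eq x
  simp only [← hp, aeval_jordanBlock_apply]
  grind

end Jn

end Toeplitz

section InnerDerivation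

variable {n : ℕ}

/-- The inner derivation `x ↦ xM - Mx` of `𝒥ₙ` into `Mₙ(ℂ)`. -/
def innerDerivation (M : Matrix (Fin n) (Fin n) ℂ) : Jn n →ₗ[ℂ] Matrix (Fin n) (Fin n) ℂ :=
  (LinearMap.mulRight ℂ M - LinearMap.mulLeft ℂ M) ∘ₗ (Jn n).val.toLinearMap

theorem innerDerivation_apply (M : Matrix (Fin n) (Fin n) ℂ) (x : Jn n) :
    innerDerivation M x = x.1 * M - M * x.1 :=
  rfl

theorem isDerivation_innerDerivation (M : Matrix (Fin n) (Fin n) ℂ) :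
    IsDerivation (innerDerivation M) := by
  intro x y
  simp only [innerDerivation_apply, MulMemClass.coe_mul]
  noncomm_ring

theorem innerDerivation_single_last (k : Fin (n + 1)) (c : ℂ) (x : Jn (n + 1)) :
    innerDerivation (single k (Fin.last n) c) x =
      ∑ i ∈ Finset.Iio k, single i (Fin.last n) (x.1 i k * c) := by
  ext i j
  rw [innerDerivation_apply, Matrix.sub_apply, Matrix.sum_apply]
  rcases (Fin.le_last j).lt_or_eq with hj | rfl
  · have hx : x.1 (Fin.last n) j = 0 := Jn.apply_eq_zero_of_lt x hj
    rw [mul_single_apply_of_ne _ _ _ _ _ hj.ne]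
    rcases eq_or_ne i k with rfl | hi
    · simp [hx, hj.ne']
    · simp [hi, hj.ne']
  · have hsum : ∑ a ∈ Finset.Iio k, single a (Fin.last n) (x.1 a k * c) i (Fin.last n) =
        if i < k then x.1 i k * c else 0 := by
      simp [single_apply]
    rw [hsum, mul_single_apply_same]
    rcases lt_trichotomy i k with hi | rfl | hi
    · simp [hi, hi.ne]
    · have hx : x.1 (Fin.last n) (Fin.last n) = x.1 i i :=
        Jn.apply_eq_apply_of_add_eq x (add_comm _ _)
      simp [hx, mul_comm]
    · simp [hi.ne', hi.not_gt, Jn.apply_eq_zero_of_lt x hi]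

end InnerDerivation

section CornerMap

variable (m : ℕ)

/-- The map `λ₁I + λ₂D + ⋯ + λₙDⁿ⁻¹ ↦ (aλ₂ + bλ₃)E₁ₙ` on `𝒥ₙ`, for `n = m + 3`; the coefficients
`λ₂` and `λ₃` are read off the first row of the matrix. -/
def cornerMap (a b : ℂ) : Jn (m + 3) →ₗ[ℂ] Matrix (Fin (m + 3)) (Fin (m + 3)) ℂ :=
  singleLinearMap ℂ 0 (Fin.last (m + 2)) ∘ₗ
    (a • entryLinearMap ℂ ℂ 0 1 + b • entryLinearMap ℂ ℂ 0 2) ∘ₗ (Jn (m + 3)).val.toLinearMap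

theorem cornerMap_apply (a b : ℂ) (x : Jn (m + 3)) :
    cornerMap m a b x = single 0 (Fin.last (m + 2)) (a * x.1 0 1 + b * x.1 0 2) :=
  rfl

theorem isLocalDerivation_cornerMap (a b : ℂ) : IsLocalDerivation (cornerMap m a b) := by
  intro x
  by_cases hx : x.1 0 1 = 0
  · have hx' : x.1 1 2 = x.1 0 1 := Jn.apply_eq_apply_of_add_eq x rfl
    refine ⟨innerDerivation (single 2 (Fin.last _) b), isDerivation_innerDerivation _, ?_⟩
    have hIio : Finset.Iio (2 : Fin (m + 3)) = {0, 1} := by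
      ext i
      simp only [Finset.mem_Iio, Finset.mem_insert, Finset.mem_singleton, Fin.lt_def, Fin.ext_iff,
        Fin.val_zero, Fin.val_one, Fin.val_two]
      omega
    simp [cornerMap_apply, innerDerivation_single_last, hIio, hx, hx', mul_comm]
  · refine ⟨innerDerivation (single 1 (Fin.last _) ((a * x.1 0 1 + b * x.1 0 2) / x.1 0 1)),
      isDerivation_innerDerivation _, ?_⟩
    have hIio : Finset.Iio (1 : Fin (m + 3)) = {0} := by ext i; simp
    rw [cornerMap_apply, innerDerivation_single_last, hIio, Finset.sum_singleton,
      mul_div_cancel₀ _ hx]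

theorem eq_zero_of_isDerivation_cornerMap {a b : ℂ} (h : IsDerivation (cornerMap m a b)) :
    b = 0 := by
  let D : Jn (m + 3) := ⟨jordanBlock (m + 3), Jn.jordanBlock_mem⟩
  have hD : cornerMap m a b D = single 0 (Fin.last (m + 2)) a := by
    simp [cornerMap_apply, D, jordanBlock_apply, Nat.mod_eq_of_lt]
  have hD_sq : cornerMap m a b (D * D) = single 0 (Fin.last (m + 2)) b := by
    simp [cornerMap_apply, D, ← sq, jordanBlock_pow_apply, Nat.mod_eq_of_lt]
  have hLeibniz := congr_fun₂ (h D D) 0 (Fin.last (m + 2))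
  rw [hD_sq, hD] at hLeibniz
  simpa [D, jordanBlock_apply] using hLeibniz

end CornerMap

/-- For `n ≥ 3`, the linear map `δ : 𝒥ₙ → Mₙ(ℂ)` sending
`A = λ₁I + λ₂Dₙ + ⋯ + λₙDₙ^{n-1}` to `(λ₃ − λ₂)E₁ₙ` is a local derivation but not a
derivation. -/
theorem jordan_local_derivation_not_derivation (n : ℕ) (hn : 3 ≤ n) :
    ∃ δ : ↥(Jn n) →ₗ[ℂ] Matrix (Fin n) (Fin n) ℂ,
      (∀ (lam : Fin n → ℂ)
          (h : (∑ i : Fin n, lam i • jordanBlock n ^ (i : ℕ)) ∈ Jn n),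
          δ ⟨∑ i : Fin n, lam i • jordanBlock n ^ (i : ℕ), h⟩ =
            (lam ⟨2, by omega⟩ - lam ⟨1, by omega⟩) •
              Matrix.single (⟨0, by omega⟩ : Fin n) (⟨n - 1, by omega⟩ : Fin n) 1) ∧
      IsLocalDerivation δ ∧ ¬ IsDerivation δ := by
  obtain ⟨m, rfl⟩ := Nat.exists_eq_add_of_le' hn
  refine ⟨cornerMap m (-1) 1, fun lam h => ?_, isLocalDerivation_cornerMap m _ _,
    fun h => one_ne_zero (eq_zero_of_isDerivation_cornerMap m h)⟩
  have hentry := sum_smul_jordanBlock_pow_apply_zero lam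
  rw [cornerMap_apply, smul_single]
  congr 1
  calc -1 * _ + 1 * _ = -1 * lam 1 + 1 * lam 2 := by rw [← hentry 1, ← hentry 2]; rfl
    _ = (lam 2 - lam 1) • 1 := by rw [smul_eq_mul]; ring
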